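/- Let E be a finite set and let 0 → G →∂ ℤ^E →β A → 0 be a short exact sequence of finitely generated free abelian groups. Dualizing gives the exact sequence 0 → Hom(A,ℤ) →β∨ Hom(ℤ^E,ℤ) →∂∨ Hom(G,ℤ) → 0, and we identify Hom(ℤ^E,ℤ) with ℤ^E via the standard dual basis. Then a subset b ⊆ E is a base for the original sequence if and only if its complement E∖b is a base for the dual sequence, i.e. the composite ℤ^(E∖b) → ℤ^E ≅ Hom(ℤ^E,ℤ) →∂∨ Hom(G,ℤ) is an isomorphism. (This is the bijection of bases 𝔹 ≅ 𝔹^! underlying Gale/symplectic duality of hypertoric varieties.) -/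

import Mathlib

/-!
Write `r : G → ℤ^(E∖b)` for `∂` followed by restriction of coordinates. The theorem splits into
two equivalences, both with the bijectivity of `r` in the middle.

* `ℤ^b → A` is bijective iff `r` is (`bijective_base_iff`). This is a diagram chase between
  `0 → G → ℤ^E → A → 0` and the split sequence `0 → ℤ^b → ℤ^E → ℤ^(E∖b) → 0`.
* The composite `ℤ^(E∖b) → Hom(G,ℤ)` is the dual map of `r`, precomposed with the self-duality of
  `ℤ^(E∖b)`, and a map between finitely generated free modules is bijective iff its dual map is
  (`dualMap_bijective_iff_of_isReflexive`), by naturality of the isomorphism with the double dual.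
-/

/-- A linear map between reflexive modules is bijective iff its dual map is; the nontrivial
direction dualizes a second time. -/
lemma dualMap_bijective_iff_of_isReflexive {R M N : Type*} [CommRing R] [AddCommGroup M] [Module R M]
    [AddCommGroup N] [Module R N] [Module.IsReflexive R M] [Module.IsReflexive R N]
    (r : M →ₗ[R] N) : Function.Bijective r.dualMap ↔ Function.Bijective r := by
  refine ⟨fun h => ?_, fun h => (LinearEquiv.ofBijective r h).dualMap.bijective⟩
  have h2 : Function.Bijective r.dualMap.dualMap :=
    (LinearEquiv.ofBijective r.dualMap h).dualMap.bijective
  have hnat : ⇑(Module.Dual.eval R N) ∘ r = r.dualMap.dualMap ∘ Module.Dual.eval R M := rfl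
  rw [← Function.Bijective.of_comp_iff' (Module.bijective_dual_eval R N) r, hnat]
  exact h2.comp (Module.bijective_dual_eval R M)

/-- Diagram chase: `b` is a base iff `∂` followed by restriction to the coordinates outside `b`
is bijective. -/
lemma bijective_base_iff {E G A : Type*} [AddCommGroup G] [AddCommGroup A]
    (d : G →ₗ[ℤ] (E → ℤ)) (β : (E → ℤ) →ₗ[ℤ] A)
    (hinj : Function.Injective d) (hsurj : Function.Surjective β)
    (hexact : LinearMap.range d = LinearMap.ker β)
    (b : Set E) [DecidablePred (· ∈ b)] :
    Function.Bijective
        (fun f : b → ℤ => β (fun e => if h : e ∈ b then f ⟨e, h⟩ else 0)) ↔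
      Function.Bijective
        ((LinearMap.funLeft ℤ ℤ (Subtype.val : {e : E // e ∉ b} → E)).comp d) := by
  have hβd : ∀ g, β (d g) = 0 := fun g =>
    LinearMap.mem_ker.1 (hexact ▸ LinearMap.mem_range_self d g)
  have hker : ∀ v, β v = 0 → ∃ g, d g = v := fun v hv =>
    LinearMap.mem_range.1 (hexact ▸ LinearMap.mem_ker.2 hv)
  -- A vector vanishing outside `b` is the extension by zero of its restriction to `b`.
  have hext : ∀ v : E → ℤ, (∀ e, e ∉ b → v e = 0) →
      (fun e => if h : e ∈ b then (fun i : b => v i) ⟨e, h⟩ else 0) = v := by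
    intro v hv
    funext e
    by_cases h : e ∈ b
    · simp [h]
    · simp [h, hv e h]
  constructor
  · rintro ⟨hi, hs⟩
    constructor
    · rw [injective_iff_map_eq_zero]
      intro g hg
      have hz : ∀ e, e ∉ b → d g e = 0 := fun e he => congrFun hg ⟨e, he⟩
      have h0 : (fun i : b => d g i) = 0 := by
        apply hi
        change β _ = β _
        rw [hext _ hz, hβd]
        refine (map_zero β).symm.trans (congrArg β ?_)
        funext e
        simp
      apply hinj
      rw [map_zero, ← hext _ hz, h0]
      funext e
      simp
    · intro y
      obtain ⟨x, hx⟩ := hs (β (fun e => if h : e ∈ b then 0 else y ⟨e, h⟩))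
      obtain ⟨g, hg⟩ := hker _ (by rw [map_sub]; exact sub_eq_zero.2 hx.symm)
      refine ⟨g, ?_⟩
      funext e
      change d g e = y e
      rw [hg]
      simp [e.2]
  · rintro ⟨hi, hs⟩
    constructor
    · intro x x' hx
      obtain ⟨g, hg⟩ := hker _ (by rw [map_sub]; exact sub_eq_zero.2 hx)
      have hg0 : g = 0 := by
        apply hi
        rw [map_zero]
        funext e
        change d g e = 0
        rw [hg]
        simp [e.2]
      funext i
      have := congrFun hg i
      simp only [hg0, map_zero, Pi.zero_apply, Pi.sub_apply, i.2, dite_true] at this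
      exact (sub_eq_zero.1 this.symm)
    · intro a
      obtain ⟨v, rfl⟩ := hsurj a
      obtain ⟨g, hg⟩ := hs (fun e => v e)
      refine ⟨fun i => (v - d g) i, ?_⟩
      change β _ = _
      rw [hext (v - d g) fun e he => sub_eq_zero.2 (congrFun hg ⟨e, he⟩).symm, map_sub, hβd,
        sub_zero]

/-- With `0 → G →∂ ℤ^E →β A → 0` a short exact sequence of finitely
generated free abelian groups, a subset `b ⊆ E` is a base for the original sequence
iff its complement `E∖b` is a base for the dual sequence, i.e. the composite
`ℤ^(E∖b) → ℤ^E ≅ Hom(ℤ^E,ℤ) →∂∨ Hom(G,ℤ)` is an isomorphism.  Here the map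
`ℤ^(E∖b) → Hom(G,ℤ)` sends `f` to the functional `g ↦ Σ_{e∉b} f e · (∂ g) e`,
written below as `(Σ_e f e • proj e) ∘ ∂`. -/
theorem stmt_1
    {E : Type*} [Fintype E] {G A : Type*}
    [AddCommGroup G] [AddCommGroup A]
    [Module.Free ℤ G] [Module.Finite ℤ G] [Module.Free ℤ A] [Module.Finite ℤ A]
    (d : G →ₗ[ℤ] (E → ℤ)) (β : (E → ℤ) →ₗ[ℤ] A)
    (hinj : Function.Injective d) (hsurj : Function.Surjective β)
    (hexact : LinearMap.range d = LinearMap.ker β)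
    (b : Set E) [DecidablePred (· ∈ b)] :
    Function.Bijective
        (fun f : b → ℤ => β (fun e => if h : e ∈ b then f ⟨e, h⟩ else 0)) ↔
      Function.Bijective
        (fun f : {e : E // e ∉ b} → ℤ =>
          ((∑ e : {e : E // e ∉ b}, f e • (LinearMap.proj e.1 : (E → ℤ) →ₗ[ℤ] ℤ)).comp d)) := by
  classical
  rw [bijective_base_iff d β hinj hsurj hexact b, ← dualMap_bijective_iff_of_isReflexive,
    ← Function.Bijective.of_comp_iff _ (dotProductEquiv ℤ {e : E // e ∉ b}).bijective]
  refine iff_of_eq (congrArg Function.Bijective ?_)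
  funext f
  ext g
  simp [dotProduct, LinearMap.funLeft_apply]
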